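/- Let L = N(A₉²D₆), let T = ℤa₁ × {0} × i₁(A₅) be the embedded copy of A₁ ⊕ A₅ (with A₁ = a₁ in the first A₉-factor and A₅ = i₁(A₅) in the D₆-factor), let W be the orthogonal complement of T in L and N the orthogonal complement of T in A₉⊕A₉⊕D₆. Then W/N is a cyclic group of order 10, and the submodule of W generated by the norm-2 vectors of W equals (ℤ-span of {a₃,…,a₉}) × A₉ × {0}, a lattice isometric to A₇ ⊕ A₉ which is saturated in W (so the associated elliptic fibration has trivial torsion and Mordell–Weil rank 2). -/

import Mathlib

noncomputable section

abbrev V6 : Type := Fin 6 → ℚ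

/-- The standard bilinear form on `ℚ⁶`. -/
def bil6 (x y : V6) : ℚ := ∑ i, x i * y i

def d1 : V6 := ![1, -1, 0, 0, 0, 0]
def d2 : V6 := ![0, 1, -1, 0, 0, 0]
def d3 : V6 := ![0, 0, 1, -1, 0, 0]
def d4 : V6 := ![0, 0, 0, 1, -1, 0]
def d5 : V6 := ![0, 0, 0, 0, 1, -1]
def d6 : V6 := ![0, 0, 0, 0, 1, 1]

/-- The `D₆` root lattice: integer vectors with even coordinate sum. -/
def D6 : Submodule ℤ V6 where
  carrier := {x | (∀ i, ∃ m : ℤ, x i = (m : ℚ)) ∧ ∃ k : ℤ, (∑ i, x i) = 2 * (k : ℚ)}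
  add_mem' := by
    rintro x y ⟨hx1, kx, hx2⟩ ⟨hy1, ky, hy2⟩
    refine ⟨fun i => ?_, kx + ky, ?_⟩
    · obtain ⟨m, hm⟩ := hx1 i
      obtain ⟨m', hm'⟩ := hy1 i
      exact ⟨m + m', by push_cast [Pi.add_apply, hm, hm']; ring⟩
    · have : (∑ i, (x + y) i) = (∑ i, x i) + ∑ i, y i := by
        simp [Pi.add_apply, Finset.sum_add_distrib]
      rw [this, hx2, hy2]; push_cast; ring
  zero_mem' := ⟨fun i => ⟨0, by simp⟩, 0, by simp⟩
  smul_mem' := by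
    rintro c x ⟨hx1, k, hx2⟩
    refine ⟨fun i => ?_, c * k, ?_⟩
    · obtain ⟨m, hm⟩ := hx1 i
      refine ⟨c * m, ?_⟩
      have : (c • x) i = (c : ℚ) * x i := by simp [Pi.smul_apply, zsmul_eq_mul]
      rw [this, hm]; push_cast; ring
    · have : (∑ i, (c • x) i) = (c : ℚ) * ∑ i, x i := by
        simp [Pi.smul_apply, zsmul_eq_mul, Finset.mul_sum]
      rw [this, hx2]; push_cast; ring

/-- The first embedding `i₁(A₅) ⊂ D₆`, spanned by `d₁,…,d₅`. -/
def i1A5 : Submodule ℤ V6 := Submodule.span ℤ {d1, d2, d3, d4, d5}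

/-- The second embedding `i₂(A₅) ⊂ D₆`, spanned by `d₁,…,d₄,d₆`. -/
def i2A5 : Submodule ℤ V6 := Submodule.span ℤ {d1, d2, d3, d4, d6}

/-- The Weyl group `W(D₆)`: the subgroup of linear automorphisms of `ℚ⁶` generated by
the reflections in the roots (norm-`2` vectors) of `D₆`. -/
def WeylD6 : Subgroup (V6 ≃ₗ[ℚ] V6) :=
  Subgroup.closure {s | ∃ r ∈ (D6 : Set V6), bil6 r r = 2 ∧ ∀ x, s x = x - bil6 x r • r}


/-- The nontrivial Dynkin diagram automorphism `g` of `D₆`: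
`g(e₆) = -e₆` and `g(eᵢ) = eᵢ` for `i ≤ 5` (it interchanges `d₅` and `d₆`). -/
def gmap (x : V6) : V6 := fun i => if i = 5 then -x 5 else x i

/-- The glue vector `δ₆ = ½(d₁+2d₂+3d₃+4d₄+2d₅+3d₆)`, representing the class `[1]`. -/
def delta6 : V6 :=
  (1/2 : ℚ) • (d1 + (2 : ℚ) • d2 + (3 : ℚ) • d3 + (4 : ℚ) • d4 + (2 : ℚ) • d5 + (3 : ℚ) • d6)

/-- The glue vector `δ̄₆ = d₁+d₂+d₃+d₄+½(d₅+d₆)`, representing the class `[2]`. -/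
def deltaBar6 : V6 := d1 + d2 + d3 + d4 + (1/2 : ℚ) • (d5 + d6)

/-- The glue vector `δ̃₆ = ½(d₁+2d₂+3d₃+4d₄+3d₅+2d₆)`, representing the class `[3]`. -/
def deltaTilde6 : V6 :=
  (1/2 : ℚ) • (d1 + (2 : ℚ) • d2 + (3 : ℚ) • d3 + (4 : ℚ) • d4 + (3 : ℚ) • d5 + (2 : ℚ) • d6)

abbrev V10 : Type := Fin 10 → ℚ

/-- The standard bilinear form on `ℚ¹⁰`. -/
def bil10 (x y : V10) : ℚ := ∑ i, x i * y i

/-- The simple roots `aᵢ = eᵢ - eᵢ₊₁` of `A₉` (here `a i` is `a_{i+1}` for `i : Fin 9`). -/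
def a (i : Fin 9) : V10 :=
  fun j => if (j : ℕ) = (i : ℕ) then 1 else if (j : ℕ) = (i : ℕ) + 1 then -1 else 0

/-- The `A₉` root lattice: integer vectors in `ℚ¹⁰` with coordinate sum zero. -/
def A9 : Submodule ℤ V10 where
  carrier := {x | (∀ i, ∃ m : ℤ, x i = (m : ℚ)) ∧ (∑ i, x i) = 0}
  add_mem' := by
    rintro x y ⟨hx1, hx2⟩ ⟨hy1, hy2⟩
    refine ⟨fun i => ?_, ?_⟩
    · obtain ⟨m, hm⟩ := hx1 i
      obtain ⟨m', hm'⟩ := hy1 i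
      exact ⟨m + m', by push_cast [Pi.add_apply, hm, hm']; ring⟩
    · have : (∑ i, (x + y) i) = (∑ i, x i) + ∑ i, y i := by
        simp [Pi.add_apply, Finset.sum_add_distrib]
      rw [this, hx2, hy2]; ring
  zero_mem' := ⟨fun i => ⟨0, by simp⟩, by simp⟩
  smul_mem' := by
    rintro c x ⟨hx1, hx2⟩
    refine ⟨fun i => ?_, ?_⟩
    · obtain ⟨m, hm⟩ := hx1 i
      refine ⟨c * m, ?_⟩
      have : (c • x) i = (c : ℚ) * x i := by simp [Pi.smul_apply, zsmul_eq_mul]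
      rw [this, hm]; push_cast; ring
    · have : (∑ i, (c • x) i) = (c : ℚ) * ∑ i, x i := by
        simp [Pi.smul_apply, zsmul_eq_mul, Finset.mul_sum]
      rw [this, hx2]; ring

/-- The glue generator `α = (1/10)(9a₁+8a₂+7a₃+6a₄+5a₅+4a₆+3a₇+2a₈+a₉)` of `A₉*/A₉`. -/
def alphaA9 : V10 := (1/10 : ℚ) • ∑ i : Fin 9, ((9 : ℚ) - (i : ℕ)) • a i

/-- The nontrivial diagram automorphism `γ₀` of `A₉`: `eᵢ ↦ -e₁₁₋ᵢ` (so `aᵢ ↦ a₁₀₋ᵢ`). -/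
def gamma0 (x : V10) : V10 := fun j => -(x j.rev)

abbrev V26 : Type := V10 × V10 × V6

/-- The standard bilinear form on `ℚ²⁶ = ℚ¹⁰ ⊕ ℚ¹⁰ ⊕ ℚ⁶`. -/
def bil26 (x y : V26) : ℚ := bil10 x.1 y.1 + bil10 x.2.1 y.2.1 + bil6 x.2.2 y.2.2

/-- The Niemeier lattice `N(A₉²D₆)`: the `ℤ`-submodule of `ℚ²⁶` generated by `A₉ ⊕ A₉ ⊕ D₆`
together with the glue vectors `(2α,4α,0)`, `(5α,0,δ₆)` and `(0,5α,δ̃₆)`. -/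
def NL2 : Submodule ℤ V26 :=
  Submodule.span ℤ ({p : V26 | p.1 ∈ A9 ∧ p.2.1 ∈ A9 ∧ p.2.2 ∈ D6} ∪
    {((2 : ℚ) • alphaA9, (4 : ℚ) • alphaA9, 0),
     ((5 : ℚ) • alphaA9, 0, delta6),
     (0, (5 : ℚ) • alphaA9, deltaTilde6)})

abbrev V8 : Type := Fin 8 → ℚ

/-- The standard bilinear form on `ℚ⁸`. -/
def bil8 (x y : V8) : ℚ := ∑ i, x i * y i

/-- The `A₇` root lattice: integer vectors in `ℚ⁸` with coordinate sum zero. -/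
def A7 : Submodule ℤ V8 where
  carrier := {x | (∀ i, ∃ m : ℤ, x i = (m : ℚ)) ∧ (∑ i, x i) = 0}
  add_mem' := by
    rintro x y ⟨hx1, hx2⟩ ⟨hy1, hy2⟩
    refine ⟨fun i => ?_, ?_⟩
    · obtain ⟨m, hm⟩ := hx1 i
      obtain ⟨m', hm'⟩ := hy1 i
      exact ⟨m + m', by push_cast [Pi.add_apply, hm, hm']; ring⟩
    · have : (∑ i, (x + y) i) = (∑ i, x i) + ∑ i, y i := by
        simp [Pi.add_apply, Finset.sum_add_distrib]
      rw [this, hx2, hy2]; ring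
  zero_mem' := ⟨fun i => ⟨0, by simp⟩, by simp⟩
  smul_mem' := by
    rintro c x ⟨hx1, hx2⟩
    refine ⟨fun i => ?_, ?_⟩
    · obtain ⟨m, hm⟩ := hx1 i
      refine ⟨c * m, ?_⟩
      have : (c • x) i = (c : ℚ) * x i := by simp [Pi.smul_apply, zsmul_eq_mul]
      rw [this, hm]; push_cast; ring
    · have : (∑ i, (c • x) i) = (c : ℚ) * ∑ i, x i := by
        simp [Pi.smul_apply, zsmul_eq_mul, Finset.mul_sum]
      rw [this, hx2]; ring

/-- The orthogonal complement (in `ℚ²⁶`, as a `ℤ`-submodule) of a set `S`. -/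
def orth26 (S : Set V26) : Submodule ℤ V26 where
  carrier := {x | ∀ t ∈ S, bil26 x t = 0}
  add_mem' := by
    intro x y hx hy t ht
    have h : bil26 (x + y) t = bil26 x t + bil26 y t := by
      simp [bil26, bil10, bil6, Prod.fst_add, Prod.snd_add, Pi.add_apply, add_mul,
        Finset.sum_add_distrib]
      ring
    rw [h, hx t ht, hy t ht, add_zero]
  zero_mem' := by intro t ht; simp [bil26, bil10, bil6]
  smul_mem' := by
    intro c x hx t ht
    have h : bil26 (c • x) t = (c : ℚ) * bil26 x t := by
      simp only [bil26, bil10, bil6, Prod.smul_fst, Prod.smul_snd, Pi.smul_apply,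
        zsmul_eq_mul]
      rw [mul_add, mul_add, Finset.mul_sum, Finset.mul_sum, Finset.mul_sum]
      simp [mul_assoc]
    rw [h, hx t ht, mul_zero]

/-- The embedded copy `T = ℤa₁ × {0} × i₁(A₅)` of `A₁ ⊕ A₅` in `N(A₉²D₆)`. -/
def Tset2 : Set V26 := {p | (∃ c : ℤ, p.1 = c • a 0) ∧ p.2.1 = 0 ∧ p.2.2 ∈ i1A5}

/-- `W`, the orthogonal complement of `T` in the Niemeier lattice `N(A₉²D₆)`. -/
def W2 : Submodule ℤ V26 := NL2 ⊓ orth26 Tset2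

/-- `N`, the orthogonal complement of `T` in the root lattice `A₉ ⊕ A₉ ⊕ D₆`. -/
def N2 : Submodule ℤ V26 := (A9.prod (A9.prod D6)) ⊓ orth26 Tset2

/-- The root sublattice of `W`: generated by the norm-`2` vectors of `W`. -/
def R2 : Submodule ℤ V26 := Submodule.span ℤ {x : V26 | x ∈ W2 ∧ bil26 x x = 2}

theorem bil10_smul_a_zero (x : V10) (c : ℤ) : bil10 x (c • a 0) = c * (x 0 - x 1) := by
  simp [bil10, a, Fin.sum_univ_succ]
  ring

theorem alphaA9_apply (i : Fin 10) : alphaA9 i = (if i = 0 then 1 else 0) - 1 / 10 := by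
  fin_cases i <;> simp [alphaA9, a, Fin.sum_univ_succ] <;> norm_num

theorem delta6_apply (i : Fin 6) : delta6 i = 1 / 2 := by
  fin_cases i <;> simp [delta6, d1, d2, d3, d4, d5, d6] <;> norm_num

theorem deltaTilde6_apply (i : Fin 6) : deltaTilde6 i = if i = 5 then -1 / 2 else 1 / 2 := by
  fin_cases i <;> simp [deltaTilde6, d1, d2, d3, d4, d5, d6] <;> norm_num

/-- A vector of `ℚ⁶` constant on all coordinates is orthogonal to `i₁(A₅)`. -/
theorem bil6_eq_zero_of_mem_i1A5 {z t : V6} (hz : ∀ i, z i = z 0) (ht : t ∈ i1A5) :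
    bil6 z t = 0 := by
  have hsum : ∑ i, t i = 0 := by
    refine Submodule.span_induction (p := fun t _ => ∑ i, t i = 0) ?_ ?_ ?_ ?_ ht
    · rintro x (rfl | rfl | rfl | rfl | rfl) <;>
        simp [d1, d2, d3, d4, d5, Fin.sum_univ_succ]
    · simp
    · intro x y _ _ hx hy
      simp [Finset.sum_add_distrib, hx, hy]
    · intro c x _ hx
      simp [← Finset.mul_sum, hx]
  simp only [bil6]
  rw [Finset.sum_congr rfl fun i _ => by rw [hz i], ← Finset.mul_sum, hsum, mul_zero]

/-- The orthogonal complement of `T` consists of the `(x, y, z)` with `x₁ = x₂` and `z` constant. -/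
theorem mem_orth26_Tset2 {w : V26} :
    w ∈ orth26 Tset2 ↔ w.1 0 = w.1 1 ∧ ∀ i, w.2.2 i = w.2.2 0 := by
  constructor
  · intro h
    have key (d : V6) (hd : d ∈ ({d1, d2, d3, d4, d5} : Set V6)) : bil6 w.2.2 d = 0 := by
      have := h (0, 0, d) ⟨⟨0, by simp⟩, rfl, Submodule.subset_span hd⟩
      simpa [bil26, bil10] using this
    have h0 := h (a 0, 0, 0) ⟨⟨1, by simp⟩, rfl, zero_mem _⟩
    have h1 := key d1 (by simp)
    have h2 := key d2 (by simp)
    have h3 := key d3 (by simp)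
    have h4 := key d4 (by simp)
    have h5 := key d5 (by simp)
    have ha := bil10_smul_a_zero w.1 1
    simp only [one_smul, Int.cast_one, one_mul] at ha
    have hb : bil10 w.1 (a 0) = 0 := by simpa [bil26, bil10, bil6] using h0
    simp [bil6, d1, d2, d3, d4, d5, Fin.sum_univ_succ] at h1 h2 h3 h4 h5
    refine ⟨by linarith, fun i => ?_⟩
    fin_cases i <;> simp <;> linarith
  · rintro ⟨hx, hz⟩ t ⟨⟨c, hc⟩, ht, ht'⟩
    rw [bil26, hc, ht, bil10_smul_a_zero, bil6_eq_zero_of_mem_i1A5 hz ht', hx]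
    simp [bil10]

/-- The Niemeier lattice modulo its root lattice is generated by the three glue vectors. -/
theorem mem_NL2 {w : V26} :
    w ∈ NL2 ↔ ∃ (p q r : ℤ) (e : V26), e ∈ A9.prod (A9.prod D6) ∧
      w = e + (p • ((2 : ℚ) • alphaA9, (4 : ℚ) • alphaA9, (0 : V6)) +
        q • ((5 : ℚ) • alphaA9, (0 : V10), delta6) +
        r • ((0 : V10), (5 : ℚ) • alphaA9, deltaTilde6)) := by
  have hset : {p : V26 | p.1 ∈ A9 ∧ p.2.1 ∈ A9 ∧ p.2.2 ∈ D6} =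
      (A9.prod (A9.prod D6) : Submodule ℤ V26) := by
    ext p
    simp
  rw [NL2, hset, Submodule.span_union, Submodule.span_eq, Submodule.mem_sup]
  constructor
  · rintro ⟨e, he, g, hg, rfl⟩
    obtain ⟨p, q, r, rfl⟩ := Submodule.mem_span_triple.1 hg
    exact ⟨p, q, r, e, he, rfl⟩
  · rintro ⟨p, q, r, e, he, rfl⟩
    exact ⟨e, he, _, Submodule.mem_span_triple.2 ⟨p, q, r, rfl⟩, rfl⟩

/-- Coordinates on `W`: its glue class is `s`, with components `s α`, `2 s α` and `s δ₆`. -/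
theorem mem_W2 {w : V26} :
    w ∈ W2 ↔ ∃ (s k : ℤ) (u v : Fin 10 → ℤ), ∑ i, u i = s ∧ ∑ i, v i = 2 * s ∧ u 0 = u 1 ∧
      (∀ i, w.1 i = u i - s / 10) ∧ (∀ i, w.2.1 i = v i - 2 * s / 10) ∧
      ∀ i, w.2.2 i = s / 2 + k := by
  rw [W2, Submodule.mem_inf, mem_orth26_Tset2, mem_NL2]
  constructor
  · rintro ⟨⟨p, q, r, e, ⟨⟨hx, hxs⟩, ⟨hy, hys⟩, ⟨hz, l, hzs⟩⟩, rfl⟩, hx01, hzc⟩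
    choose x hx using hx
    choose y hy using hy
    choose z hz using hz
    simp only [hx, hy, hz] at hxs hys hzs
    have hxs' : ∑ i, x i = 0 := by exact_mod_cast hxs
    have hys' : ∑ i, y i = 0 := by exact_mod_cast hys
    have hzs' : ∑ i, z i = 2 * l := by exact_mod_cast hzs
    simp only [Prod.fst_add, Prod.snd_add, Prod.smul_fst, Prod.smul_snd, Pi.add_apply,
      Pi.smul_apply, Pi.zero_apply, hx, hz, alphaA9_apply, delta6_apply,
      deltaTilde6_apply] at hx01 hzc
    have hz1 := hzc 1
    have hz2 := hzc 2
    have hz3 := hzc 3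
    have hz4 := hzc 4
    have hz5 := hzc 5
    simp at hz1 hz2 hz3 hz4 hz5
    have hz5' : z 5 = z 0 + r := by
      have : (z 5 : ℚ) = z 0 + r := by linarith
      exact_mod_cast this
    simp only [Fin.sum_univ_succ, Fin.sum_univ_zero] at hzs'
    simp at hzs'
    have hr : r = 2 * (l - 3 * z 0) := by
      change z 0 + (z 1 + (z 2 + (z 3 + (z 4 + z 5)))) = 2 * l at hzs'
      omega
    have hrq : (r : ℚ) = 2 * (l - 3 * z 0) := by exact_mod_cast hr
    refine ⟨2 * p + 5 * q, l - 2 * z 0 - p - 2 * q,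
      fun i => x i + if i = 0 then 2 * p + 5 * q else 0,
      fun i => y i + (if i = 0 then 4 * p + 5 * r else 0) + (q - (l - 3 * z 0)),
      ?_, ?_, ?_, ?_, ?_, ?_⟩
    · simp [Finset.sum_add_distrib, hxs']
    · simp [Finset.sum_add_distrib, hys']
      linarith
    · simp at hx01
      have : (x 0 : ℚ) + (2 * p + 5 * q) = x 1 := by linarith
      simpa using (by exact_mod_cast this : x 0 + (2 * p + 5 * q) = x 1)
    · intro i
      simp [hx, alphaA9_apply]
      split_ifs <;> ring
    · intro i
      simp [hy, alphaA9_apply, hrq]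
      split_ifs <;> ring
    · intro i
      simp only [Prod.snd_add, Prod.smul_snd, Pi.add_apply, Pi.smul_apply, Pi.zero_apply, hz,
        delta6_apply, deltaTilde6_apply]
      rw [hzc i]
      simp [hrq]
      ring
  · rintro ⟨s, k, u, v, hu, hv, hu01, hx, hy, hz⟩
    refine ⟨⟨-2 * s, s, 0, (fun i => ((u i - if i = 0 then s else 0 : ℤ) : ℚ),
      fun i => ((v i - s + if i = 0 then 8 * s else 0 : ℤ) : ℚ), fun _ => (k : ℚ)),
      ⟨⟨fun i => ⟨_, rfl⟩, ?_⟩, ⟨fun i => ⟨_, rfl⟩, ?_⟩, ⟨fun i => ⟨_, rfl⟩, 3 * k, ?_⟩⟩, ?_⟩,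
      ?_, ?_⟩
    · rw [← Int.cast_sum, Finset.sum_sub_distrib, hu]
      simp
    · rw [← Int.cast_sum, Finset.sum_add_distrib, Finset.sum_sub_distrib, hv]
      simp
      ring
    · simp
      ring
    · refine Prod.ext (funext fun i => ?_) (Prod.ext (funext fun i => ?_) (funext fun i => ?_))
      · simp [hx, alphaA9_apply]
        split_ifs <;> ring
      · simp [hy, alphaA9_apply]
        split_ifs <;> ring
      · simp [hz, delta6_apply]
        ring
    · rw [hx, hx, hu01]
    · intro i
      rw [hz, hz]

/-- A vector of `A₉*` in the class `s` has norm at least `s (10 - s) / 10`. -/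
theorem bil10_self_ge {x : V10} {u : Fin 10 → ℤ} {s : ℤ} (hu : ∑ i, u i = s)
    (hx : ∀ i, x i = u i - s / 10) : (s : ℚ) * (10 - s) / 10 ≤ bil10 x x := by
  have hsq : ∑ i, u i ≤ ∑ i, u i * u i :=
    Finset.sum_le_sum fun i _ => by simpa [sq] using Int.le_self_sq (u i)
  have hsq' : (s : ℚ) ≤ ∑ i, (u i : ℚ) * u i := by
    rw [hu] at hsq
    exact_mod_cast hsq
  have hu' : ∑ i, (u i : ℚ) = s := by exact_mod_cast hu
  have : bil10 x x = ∑ i, (u i : ℚ) * u i - s ^ 2 / 10 := by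
    calc bil10 x x = ∑ i, ((u i : ℚ) * u i - s / 5 * u i + s ^ 2 / 100) :=
          Finset.sum_congr rfl fun i _ => by rw [hx]; ring
      _ = _ := by
          rw [Finset.sum_add_distrib, Finset.sum_sub_distrib, ← Finset.mul_sum, hu']
          simp
          ring
  rw [this]
  linarith

theorem bil10_self_nonneg (x : V10) : 0 ≤ bil10 x x :=
  Finset.sum_nonneg fun i _ => mul_self_nonneg (x i)

theorem a_mem_A9 (i : Fin 9) : a i ∈ A9 := by
  refine ⟨fun j => ⟨if (j : ℕ) = i then 1 else if (j : ℕ) = i + 1 then -1 else 0, ?_⟩, ?_⟩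
  · simp [a]
  · fin_cases i <;> simp [a, Fin.sum_univ_succ]

/-- The root lattice spanned by `a₃, …, a₉`, in coordinates. -/
theorem mem_span_a {x : V10} :
    x ∈ Submodule.span ℤ ({a 2, a 3, a 4, a 5, a 6, a 7, a 8} : Set V10) ↔
      x ∈ A9 ∧ x 0 = 0 ∧ x 1 = 0 := by
  constructor
  · intro h
    refine Submodule.span_induction (p := fun x _ => x ∈ A9 ∧ x 0 = 0 ∧ x 1 = 0) ?_ ?_ ?_ ?_ h
    · rintro x (rfl | rfl | rfl | rfl | rfl | rfl | rfl) <;>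
        exact ⟨a_mem_A9 _, by simp [a], by simp [a]⟩
    · exact ⟨zero_mem _, rfl, rfl⟩
    · rintro x y - - ⟨hx, hx0, hx1⟩ ⟨hy, hy0, hy1⟩
      exact ⟨add_mem hx hy, by simp [hx0, hy0], by simp [hx1, hy1]⟩
    · rintro c x - ⟨hx, hx0, hx1⟩
      exact ⟨A9.smul_mem c hx, by simp [hx0], by simp [hx1]⟩
  · rintro ⟨⟨hx, hs⟩, h0, h1⟩
    choose m hm using hx
    have hx : x = m 2 • a 2 + (m 2 + m 3) • a 3 + (m 2 + m 3 + m 4) • a 4 +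
        (m 2 + m 3 + m 4 + m 5) • a 5 + (m 2 + m 3 + m 4 + m 5 + m 6) • a 6 +
        (m 2 + m 3 + m 4 + m 5 + m 6 + m 7) • a 7 +
        (m 2 + m 3 + m 4 + m 5 + m 6 + m 7 + m 8) • a 8 := by
      have hs' : x 0 + x 1 + x 2 + x 3 + x 4 + x 5 + x 6 + x 7 + x 8 + x 9 = 0 := by
        rw [← hs]
        simp [Fin.sum_univ_succ]
        ring
      funext j
      fin_cases j <;> simp [a, h0, h1, ← hm] <;> linarith
    rw [hx]
    refine add_mem (add_mem (add_mem (add_mem (add_mem (add_mem ?_ ?_) ?_) ?_) ?_) ?_) ?_ <;>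
      exact Submodule.smul_mem _ _ (Submodule.subset_span (by simp))

theorem A9_le_span_a : A9 ≤ Submodule.span ℤ (Set.range a) := by
  rintro x ⟨hx, hs⟩
  choose m hm using hx
  have hmem (i : Fin 9) : a i ∈ Submodule.span ℤ (Set.range a) := Submodule.subset_span ⟨i, rfl⟩
  have h0 : x - m 0 • a 0 - (m 0 + m 1) • a 1 ∈
      Submodule.span ℤ ({a 2, a 3, a 4, a 5, a 6, a 7, a 8} : Set V10) := by
    refine mem_span_a.2 ⟨⟨fun j => ⟨m j -
      m 0 * (if (j : ℕ) = 0 then 1 else if (j : ℕ) = 1 then -1 else 0) -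
      (m 0 + m 1) * (if (j : ℕ) = 1 then 1 else if (j : ℕ) = 2 then -1 else 0), ?_⟩, ?_⟩, ?_, ?_⟩
    · simp [a, hm]
    · simp only [Fin.sum_univ_succ] at hs ⊢
      simp [a] at hs ⊢
      linarith
    · simp [a, hm]
    · simp [a, hm]
      ring
  have h1 : x - m 0 • a 0 - (m 0 + m 1) • a 1 ∈ Submodule.span ℤ (Set.range a) := by
    refine Submodule.span_mono ?_ h0
    rintro y (rfl | rfl | rfl | rfl | rfl | rfl | rfl) <;> exact ⟨_, rfl⟩
  have h2 := add_mem (add_mem h1 (Submodule.smul_mem _ (m 0 + m 1) (hmem 1)))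
    (Submodule.smul_mem _ (m 0) (hmem 0))
  simpa using h2

theorem bil10_a_self (i : Fin 9) : bil10 (a i) (a i) = 2 := by
  fin_cases i <;> simp [bil10, a, Fin.sum_univ_succ] <;> norm_num

theorem N2_le_W2 : N2 ≤ W2 := by
  refine inf_le_inf_right _ fun x hx => mem_NL2.2 ⟨0, 0, 0, x, hx, by simp⟩

/-- A vector of `W` whose glue class is trivial lies in `N`. -/
theorem mem_N2_of_mem_W2 {w : V26} (hw : w ∈ W2) {n : ℤ} (hn : w.1 0 = n) : w ∈ N2 := by
  refine ⟨?_, hw.2⟩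
  obtain ⟨s, k, u, v, hu, hv, hu01, hx, hy, hz⟩ := mem_W2.1 hw
  obtain ⟨t, rfl⟩ : ∃ t, s = 10 * t := by
    refine ⟨u 0 - n, ?_⟩
    rw [hx 0] at hn
    have : (s : ℚ) = 10 * (u 0 - n) := by linarith
    exact_mod_cast this
  have hu' : ∑ i, (u i : ℚ) = 10 * t := by exact_mod_cast hu
  have hv' : ∑ i, (v i : ℚ) = 2 * (10 * t) := by exact_mod_cast hv
  refine ⟨⟨fun i => ⟨u i - t, ?_⟩, ?_⟩, ⟨fun i => ⟨v i - 2 * t, ?_⟩, ?_⟩,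
    ⟨fun i => ⟨5 * t + k, ?_⟩, 15 * t + 3 * k, ?_⟩⟩
  · rw [hx]; push_cast; ring
  · simp_rw [hx]
    rw [Finset.sum_sub_distrib, hu']
    simp
  · rw [hy]; push_cast; ring
  · simp_rw [hy]
    rw [Finset.sum_sub_distrib, hv']
    simp
    ring
  · rw [hz]; push_cast; ring
  · simp_rw [hz]
    simp
    ring

/-- The glue class of a norm-`2` vector of `W` is trivial. -/
theorem exists_int_of_norm_two {w : V26} (hw : w ∈ W2) (h2 : bil26 w w = 2) :
    ∃ n : ℤ, w.1 0 = n := by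
  obtain ⟨s, k, u, v, hu, hv, -, hx, hy, hz⟩ := mem_W2.1 hw
  have hdiv := Int.emod_add_mul_ediv s 10
  have hlo := Int.emod_nonneg s (show (10 : ℤ) ≠ 0 by norm_num)
  have hhi := Int.emod_lt_of_pos s (show (0 : ℤ) < 10 by norm_num)
  set t := s % 10
  set d := s / 10
  have hs : (s : ℚ) = t + 10 * d := by exact_mod_cast hdiv.symm
  have hX : (t : ℚ) * (10 - t) / 10 ≤ bil10 w.1 w.1 := by
    refine bil10_self_ge (u := fun i => u i - d) ?_ fun i => ?_
    · simp [Finset.sum_sub_distrib, hu]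
      linarith
    · rw [hx, hs]; push_cast; ring
  have hY (e : ℤ) : ((2 * t - 10 * e : ℤ) : ℚ) * (10 - (2 * t - 10 * e : ℤ)) / 10 ≤
      bil10 w.2.1 w.2.1 := by
    refine bil10_self_ge (u := fun i => v i - 2 * d - e) ?_ fun i => ?_
    · simp [Finset.sum_sub_distrib, hv]
      linarith
    · rw [hy, hs]; push_cast; ring
  have hY0 := hY 0
  have hY1 := hY 1
  have hYn := bil10_self_nonneg w.2.1
  have hZ : bil6 w.2.2 w.2.2 = 6 * (s / 2 + k : ℚ) ^ 2 := by
    simp only [bil6, hz]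
    simp
    ring
  have hZn : 0 ≤ bil6 w.2.2 w.2.2 := by rw [hZ]; positivity
  have hZodd (c : ℤ) (hc : s = 2 * c + 1) : 3 / 2 ≤ bil6 w.2.2 w.2.2 := by
    have h1 : (0 : ℤ) ≤ (c + k) * (c + k + 1) := by
      rcases le_or_gt 0 (c + k) with h | h
      · positivity
      · exact mul_nonneg_of_nonpos_of_nonpos h.le (by omega)
    have h1' : (0 : ℚ) ≤ (c + k) * (c + k + 1) := by exact_mod_cast h1
    rw [hZ, hc]
    push_cast
    nlinarith
  rw [bil26] at h2
  have ht : t = 0 := by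
    by_contra hne
    rcases Int.emod_two_eq_zero_or_one s with hp | hp
    · have : t = 2 ∨ t = 4 ∨ t = 6 ∨ t = 8 := by omega
      rcases this with h | h | h | h <;> rw [h] at hX hY0 hY1 <;> norm_num at hX hY0 hY1 <;>
        linarith
    · have hZ' := hZodd (s / 2) (by omega)
      have : t = 1 ∨ t = 3 ∨ t = 5 ∨ t = 7 ∨ t = 9 := by omega
      rcases this with h | h | h | h | h <;> rw [h] at hX <;> norm_num at hX <;> linarith
  refine ⟨u 0 - d, ?_⟩
  rw [hx, hs, ht]
  push_cast
  ring

/-- A norm-`2` vector of `W` vanishes in its first coordinate and in its last component. -/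
theorem coords_eq_zero_of_norm_two {w : V26} (hw : w ∈ W2) (h2 : bil26 w w = 2) :
    w.1 0 = 0 ∧ w.2.2 = 0 := by
  obtain ⟨n, hn⟩ := exists_int_of_norm_two hw h2
  obtain ⟨⟨⟨-, hxs⟩, -, hz, -⟩, horth⟩ := mem_N2_of_mem_W2 hw hn
  obtain ⟨h01, hzc⟩ := mem_orth26_Tset2.1 horth
  obtain ⟨c, hc⟩ := hz 0
  have int_sq {m : ℤ} (h : m ≠ 0) : (1 : ℚ) ≤ m ^ 2 := by
    exact_mod_cast Int.one_le_abs (pow_ne_zero 2 h) |>.trans_eq (abs_of_nonneg (sq_nonneg m))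
  have hY := bil10_self_nonneg w.2.1
  have hX := bil10_self_nonneg w.1
  have hZ : bil6 w.2.2 w.2.2 = 6 * (c : ℚ) ^ 2 := by
    rw [bil6, Finset.sum_congr rfl fun i _ => by rw [hzc i, hc]]
    simp
    ring
  rw [bil26, hZ] at h2
  have hc0 : c = 0 := by
    by_contra h
    have := int_sq h
    linarith
  constructor
  · rw [hn]
    by_contra h
    have hn0 : n ≠ 0 := by exact_mod_cast h
    have h1 := int_sq hn0
    have hsplit : bil10 w.1 w.1 = 2 * (n : ℚ) ^ 2 + ∑ i : Fin 8, w.1 i.succ.succ ^ 2 := by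
      rw [bil10, Fin.sum_univ_succ, Fin.sum_univ_succ]
      simp only [Fin.succ_zero_eq_one, ← h01, hn]
      simp only [sq]
      ring
    have hnn : ∀ i ∈ Finset.univ, 0 ≤ w.1 (Fin.succ (Fin.succ (i : Fin 8))) ^ 2 :=
      fun i _ => sq_nonneg _
    have hcq : (6 : ℚ) * (c : ℚ) ^ 2 = 0 := by simp [hc0]
    have hzero : ∑ i : Fin 8, w.1 i.succ.succ ^ 2 = 0 :=
      le_antisymm (by linarith) (Finset.sum_nonneg hnn)
    have hall := (Finset.sum_eq_zero_iff_of_nonneg hnn).1 hzero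
    rw [Fin.sum_univ_succ, Fin.sum_univ_succ,
      Finset.sum_eq_zero fun i hi => by simpa using hall i hi] at hxs
    simp only [Fin.succ_zero_eq_one, ← h01, hn] at hxs
    exact h (by linarith)
  · funext i
    rw [hzc i, hc, hc0]
    simp

theorem R2_eq : R2 = (Submodule.span ℤ ({a 2, a 3, a 4, a 5, a 6, a 7, a 8} : Set V10)).prod
    (A9.prod (⊥ : Submodule ℤ V6)) := by
  apply le_antisymm
  · refine Submodule.span_le.2 ?_
    rintro w ⟨hw, h2⟩
    obtain ⟨n, hn⟩ := exists_int_of_norm_two hw h2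
    obtain ⟨hr, horth⟩ := mem_N2_of_mem_W2 hw hn
    obtain ⟨h0, hz⟩ := coords_eq_zero_of_norm_two hw h2
    exact ⟨mem_span_a.2 ⟨hr.1, h0, (mem_orth26_Tset2.1 horth).1 ▸ h0⟩, hr.2.1, hz⟩
  · have hroot {w : V26} (hw : w ∈ A9.prod (A9.prod D6)) (h01 : w.1 0 = w.1 1)
        (hz : w.2.2 = 0) (h2 : bil26 w w = 2) : w ∈ R2 :=
      Submodule.subset_span
        ⟨N2_le_W2 ⟨hw, mem_orth26_Tset2.2 ⟨h01, fun i => by rw [hz]; rfl⟩⟩, h2⟩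
    rintro ⟨x, y, z⟩ ⟨hx, hy, hz⟩
    obtain rfl : z = 0 := hz
    have hx' : (x, (0 : V10), (0 : V6)) ∈ R2 := by
      have : Submodule.span ℤ ({a 2, a 3, a 4, a 5, a 6, a 7, a 8} : Set V10) ≤
          R2.comap (LinearMap.inl ℤ V10 (V10 × V6)) := by
        refine Submodule.span_le.2 fun r hr => ?_
        obtain ⟨hr9, h0, h1⟩ := mem_span_a.1 (Submodule.subset_span hr)
        refine hroot ⟨hr9, zero_mem _, zero_mem _⟩ (h0.trans h1.symm) rfl ?_
        rcases hr with rfl | rfl | rfl | rfl | rfl | rfl | rfl <;>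
          simp [bil26, bil10_a_self] <;> simp [bil10, bil6]
      exact this hx
    have hy' : ((0 : V10), y, (0 : V6)) ∈ R2 := by
      have : Submodule.span ℤ (Set.range a) ≤
          R2.comap ((LinearMap.inr ℤ V10 (V10 × V6)).comp (LinearMap.inl ℤ V10 V6)) := by
        refine Submodule.span_le.2 ?_
        rintro _ ⟨i, rfl⟩
        refine hroot ⟨zero_mem _, a_mem_A9 i, zero_mem _⟩ rfl rfl ?_
        simp [bil26, bil10_a_self]
        simp [bil10, bil6]
      exact this (A9_le_span_a hy)
    simpa using add_mem hx' hy'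

theorem mem_R2 {w : V26} :
    w ∈ R2 ↔ (w.1 ∈ A9 ∧ w.1 0 = 0 ∧ w.1 1 = 0) ∧ w.2.1 ∈ A9 ∧ w.2.2 = 0 := by
  rw [R2_eq, Submodule.mem_prod, Submodule.mem_prod, mem_span_a, Submodule.mem_bot]

theorem R2_saturated {w : V26} (hw : w ∈ W2) {n : ℤ} (hn : n ≠ 0) (h : n • w ∈ R2) :
    w ∈ R2 := by
  obtain ⟨⟨-, h0, h1⟩, -, hz⟩ := mem_R2.1 h
  have hn' : (n : ℚ) ≠ 0 := by exact_mod_cast hn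
  have h0' : w.1 0 = 0 := by simpa [hn'] using h0
  have h1' : w.1 1 = 0 := by simpa [hn'] using h1
  have hzero : w.2.2 = 0 := (smul_eq_zero.1 (show n • w.2.2 = 0 from hz)).resolve_left hn
  obtain ⟨hr, -⟩ := mem_N2_of_mem_W2 hw (n := 0) (by simpa using h0')
  exact mem_R2.2 ⟨⟨hr.1, h0', h1'⟩, hr.2.1, hzero⟩

/-- Extension of a vector of `ℚ⁸` by two zero coordinates in front. -/
def extendV8 (x : V8) : V10 := Fin.cons 0 (Fin.cons 0 x)

/-- The root lattice of `W` is `A₇ ⊕ A₉`, the first summand on the last eight coordinates. -/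
def R2Equiv : ↥R2 ≃ₗ[ℤ] (↥A7 × ↥A9) where
  toFun w := (⟨fun i => w.1.1 i.succ.succ, fun i => (mem_R2.1 w.2).1.1.1 _, by
      obtain ⟨⟨⟨-, hs⟩, h0, h1⟩, -⟩ := mem_R2.1 w.2
      rw [Fin.sum_univ_succ, Fin.sum_univ_succ, Fin.succ_zero_eq_one, h0, h1] at hs
      simpa using hs⟩,
    ⟨w.1.2.1, (mem_R2.1 w.2).2.1⟩)
  map_add' _ _ := rfl
  map_smul' _ _ := rfl
  invFun p := ⟨(extendV8 p.1, p.2, 0), mem_R2.2 ⟨⟨⟨by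
      refine Fin.cases ⟨0, by simp [extendV8]⟩ (Fin.cases ⟨0, by simp [extendV8]⟩ fun i => ?_)
      exact p.1.2.1 i, by
      simpa [extendV8, Fin.sum_univ_succ (n := 9), Fin.sum_univ_succ (n := 8)] using p.1.2.2⟩,
      rfl, rfl⟩, p.2.2, rfl⟩⟩
  left_inv w := by
    obtain ⟨⟨-, h0, h1⟩, -, hz⟩ := mem_R2.1 w.2
    refine Subtype.ext (Prod.ext (funext ?_) (Prod.ext rfl hz.symm))
    exact Fin.cases h0.symm (Fin.cases h1.symm fun i => rfl)
  right_inv _ := rfl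

theorem bil26_eq_R2Equiv (u v : ↥R2) :
    bil26 (u : V26) (v : V26) =
      bil8 ((R2Equiv u).1 : V8) ((R2Equiv v).1 : V8) +
        bil10 ((R2Equiv u).2 : V10) ((R2Equiv v).2 : V10) := by
  obtain ⟨⟨-, h0, h1⟩, -, hz⟩ := mem_R2.1 u.2
  have hX : bil10 u.1.1 v.1.1 = bil8 ((R2Equiv u).1 : V8) ((R2Equiv v).1 : V8) := by
    rw [bil10, Fin.sum_univ_succ, Fin.sum_univ_succ, Fin.succ_zero_eq_one, h0, h1]
    simp only [zero_mul, zero_add]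
    rfl
  have hZ : bil6 u.1.2.2 v.1.2.2 = 0 := by simp [bil6, hz]
  rw [bil26, hX, hZ, add_zero]
  rfl

theorem exists_int_ten_mul {w : V26} (hw : w ∈ W2) : ∃ n : ℤ, 10 * w.1 0 = n := by
  obtain ⟨s, -, u, -, -, -, -, hx, -⟩ := mem_W2.1 hw
  refine ⟨10 * u 0 - s, ?_⟩
  rw [hx]
  push_cast
  ring

/-- The glue class of a vector of `W`, up to sign: `10 x₁` modulo `10`. -/
def glueClass : ↥W2 →+ ZMod 10 where
  toFun w := ((⌊10 * w.1.1 0⌋ : ℤ) : ZMod 10)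
  map_zero' := by simp
  map_add' w w' := by
    obtain ⟨n, hn⟩ := exists_int_ten_mul w.2
    have : (10 : ℚ) * (w + w').1.1 0 = n + 10 * w'.1.1 0 := by
      rw [← hn]
      simp [mul_add]
    rw [this, hn, Int.floor_intCast_add]
    simp

theorem glueClass_surjective : Function.Surjective glueClass := by
  intro c
  obtain ⟨n, rfl⟩ := ZMod.intCast_surjective c
  refine ⟨⟨(fun i => ((if i = 2 then -n else 0 : ℤ) : ℚ) - (-n : ℤ) / 10,
    fun i => ((if i = 0 then 2 * -n else 0 : ℤ) : ℚ) - 2 * (-n : ℤ) / 10,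
    fun _ => ((-n : ℤ) : ℚ) / 2 + (0 : ℤ)),
    mem_W2.2 ⟨-n, 0, fun i => if i = 2 then -n else 0, fun i => if i = 0 then 2 * -n else 0,
      by simp, by simp, by simp, fun i => rfl, fun i => rfl, fun i => rfl⟩⟩, ?_⟩
  have : -((10 : ℚ) * (-n / 10)) = n := by ring
  simp [glueClass, this]

theorem ker_glueClass : LinearMap.ker glueClass.toIntLinearMap = N2.comap W2.subtype := by
  ext w
  obtain ⟨n, hn⟩ := exists_int_ten_mul w.2
  have hval : glueClass w = (n : ZMod 10) := by
    change ((⌊10 * w.1.1 0⌋ : ℤ) : ZMod 10) = n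
    rw [hn, Int.floor_intCast]
  rw [LinearMap.mem_ker, AddMonoidHom.coe_toIntLinearMap, hval, Submodule.mem_comap,
    ZMod.intCast_zmod_eq_zero_iff_dvd]
  constructor
  · rintro ⟨k, rfl⟩
    refine mem_N2_of_mem_W2 w.2 (n := k) ?_
    push_cast at hn
    change w.1.1 0 = k
    linarith
  · rintro ⟨⟨⟨hx, -⟩, -⟩, -⟩
    obtain ⟨m, hm⟩ := hx 0
    refine ⟨m, ?_⟩
    have : w.1.1 0 = m := hm
    rw [this] at hn
    exact_mod_cast hn.symm

/-- For the embedding of `A₁ ⊕ A₅` in `N(A₉²D₆)` with `A₁ = a₁` in the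
first `A₉`-factor and `A₅ = i₁(A₅)` in `D₆`: `W/N` is cyclic of order `10`; the root
sublattice of `W` equals `⟨a₃,…,a₉⟩ × A₉ × {0}`, is isometric to `A₇ ⊕ A₉`, and is
saturated in `W`. -/
theorem fibration_40_data :
    Nonempty ((↥W2 ⧸ N2.comap W2.subtype) ≃+ ZMod 10) ∧
    R2 = (Submodule.span ℤ ({a 2, a 3, a 4, a 5, a 6, a 7, a 8} : Set V10)).prod
      (A9.prod (⊥ : Submodule ℤ V6)) ∧
    (∃ f : ↥R2 ≃ₗ[ℤ] (↥A7 × ↥A9), ∀ u v : ↥R2,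
      bil26 (u : V26) (v : V26) =
        bil8 ((f u).1 : V8) ((f v).1 : V8) + bil10 ((f u).2 : V10) ((f v).2 : V10)) ∧
    (∀ x ∈ W2, ∀ n : ℤ, n ≠ 0 → n • x ∈ R2 → x ∈ R2) := by
  refine ⟨⟨((Submodule.quotEquivOfEq _ _ ker_glueClass.symm).trans
    (glueClass.toIntLinearMap.quotKerEquivOfSurjective glueClass_surjective)).toAddEquiv⟩,
    R2_eq, ⟨R2Equiv, bil26_eq_R2Equiv⟩, fun x hx n hn h => R2_saturated hx hn h⟩
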